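/- Let q ∈ (0,1), α > 0, c₁ < 0, c₂ < 0 with |c₁/c₂| q^{α+k+1} < 1, and k ∈ ℕ. Then the k-th moment of the weight w(x) = x^α (qx; q)_∞ (c₁/x; q)_∞ (qx/c₁; q)_∞ / (c₂/x; q)_∞ on the lattice {qⁿ : n ∈ ℕ} satisfies μ_k := (1-q) Σ_{n=0}^{∞} q^{n(k+1)} w(qⁿ) = (1-q) (q; q)_∞ (q/c₁; q)_∞ ((c₁; q)_∞/(c₂; q)_∞) Σ_{ℓ=0}^{∞} ((c₁/c₂) q^{α+1+k})^ℓ / ((q/c₂; q)_ℓ (q; q)_ℓ), where both series converge absolutely; the right-hand sum is ₂φ₁(0, 0; q/c₂; q; (c₁/c₂) q^{α+1+k}). -/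

import Mathlib

/-!
At `x = qⁿ` the factor `(c₁/x; q)_∞ (qx/c₁; q)_∞` of the weight is a theta function, and shifting
its argument by `q⁻ⁿ` multiplies it by `(-c₁)ⁿ q^{-n(n+1)/2}`. The denominator satisfies
`(c₂ q⁻ⁿ; q)_∞ = (-c₂)ⁿ q^{-n(n+1)/2} (q/c₂; q)_n (c₂; q)_∞`, so the powers of `q` cancel and only
`(c₁/c₂)ⁿ / (q/c₂; q)_n` survives. Together with `(q^{n+1}; q)_∞ = (q; q)_∞ / (q; q)_n` this
matches the two series term by term.
-/

open Filter Finset Topology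

/-- The finite `q`-Pochhammer symbol `(a; q)_n = ∏_{i < n} (1 - a qⁱ)`. -/
def qPochhammer {R : Type*} [CommRing R] (a q : R) (n : ℕ) : R :=
  ∏ i ∈ range n, (1 - a * q ^ i)

/-- The infinite `q`-Pochhammer symbol `(a; q)_∞ = ∏_{j ≥ 0} (1 - a qʲ)`, as an unconditional
product; it converges for `‖q‖ < 1` in a complete normed field. -/
noncomputable def qPochhammerInf {R : Type*} [CommRing R] [TopologicalSpace R] (a q : R) : R :=
  ∏' j : ℕ, (1 - a * q ^ j)

/-- The value at the lattice point `x = qⁿ` of `(qx; q)_∞ (c₁/x; q)_∞ (qx/c₁; q)_∞ / (c₂/x; q)_∞`,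
the weight without its power factor `x ^ α`. -/
noncomputable def latticeWeight {K : Type*} [Field K] [TopologicalSpace K] (q c₁ c₂ : K) (n : ℕ) :
    K :=
  qPochhammerInf (q ^ (n + 1)) q * qPochhammerInf (c₁ / q ^ n) q *
    qPochhammerInf (q ^ (n + 1) / c₁) q / qPochhammerInf (c₂ / q ^ n) q

theorem qPochhammer_succ {R : Type*} [CommRing R] (a q : R) (n : ℕ) :
    qPochhammer a q (n + 1) = qPochhammer a q n * (1 - a * q ^ n) :=
  prod_range_succ _ n

theorem qPochhammer_succ' {R : Type*} [CommRing R] (a q : R) (n : ℕ) :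
    qPochhammer a q (n + 1) = (1 - a) * qPochhammer (a * q) q n := by
  simp only [qPochhammer, prod_range_succ', pow_succ', pow_zero, mul_one, mul_assoc, mul_comm]

theorem qPochhammer_div_pow_self {K : Type*} [Field K] {a q : K} (ha : a ≠ 0) (hq : q ≠ 0) (n : ℕ) :
    qPochhammer (a / q ^ n) q n = (-a) ^ n / q ^ (n + 1).choose 2 * qPochhammer (q / a) q n := by
  induction n with
  | zero => simp [qPochhammer]
  | succ n ih =>
    have hshift : a / q ^ (n + 1) * q = a / q ^ n := by
      rw [pow_succ, div_mul_eq_mul_div, mul_div_mul_right _ _ hq]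
    have hflip : 1 - a / q ^ (n + 1) = -a / q ^ (n + 1) * (1 - q / a * q ^ n) := by
      field_simp
      ring
    have hchoose : (n + 1 + 1).choose 2 = n + 1 + (n + 1).choose 2 := by
      rw [Nat.choose_succ_succ' (n + 1) 1, Nat.choose_one_right]
    rw [qPochhammer_succ', hshift, ih, hflip, qPochhammer_succ, hchoose, pow_succ (-a), pow_add]
    ring

section NormedField

variable {𝕜 : Type*} [NormedField 𝕜] {q : 𝕜}

theorem qPochhammer_self_ne_zero (hq : ‖q‖ < 1) (n : ℕ) : qPochhammer q q n ≠ 0 := by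
  refine prod_ne_zero_iff.mpr fun i _ h => ?_
  have hpow : q ^ (i + 1) = 1 := by rw [pow_succ', ← sub_eq_zero.mp h]
  have hnorm : ‖q‖ ^ (i + 1) < 1 := pow_lt_one₀ (norm_nonneg q) hq i.succ_ne_zero
  rw [← norm_pow, hpow, norm_one] at hnorm
  exact hnorm.false

theorem summable_norm_pow_div_qPochhammer_mul_qPochhammer (hq : ‖q‖ < 1) (a b : 𝕜) {z : 𝕜}
    (hz : ‖z‖ < 1) :
    Summable fun l : ℕ => ‖z ^ l / (qPochhammer a q l * qPochhammer b q l)‖ := by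
  have hlim (c : 𝕜) : Tendsto (fun l : ℕ => 1 - c * q ^ l) atTop (𝓝 1) := by
    simpa using ((tendsto_pow_atTop_nhds_zero_of_norm_lt_one hq).const_mul c).const_sub 1
  have hratio : Tendsto (fun l : ℕ => ‖z / ((1 - a * q ^ l) * (1 - b * q ^ l))‖) atTop (𝓝 ‖z‖) := by
    simpa using (tendsto_const_nhds.div ((hlim a).mul (hlim b)) (by simp)).norm
  obtain ⟨r, hzr, hr⟩ := exists_between hz
  refine summable_of_ratio_norm_eventually_le hr ?_
  filter_upwards [hratio.eventually_le_const hzr] with l hl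
  rw [norm_norm, norm_norm, qPochhammer_succ, qPochhammer_succ, pow_succ', mul_mul_mul_comm,
    mul_comm (qPochhammer a q l * _), mul_div_mul_comm, norm_mul]
  gcongr

variable [CompleteSpace 𝕜]

theorem multipliable_one_sub_mul_pow (hq : ‖q‖ < 1) (a : 𝕜) :
    Multipliable fun j : ℕ => 1 - a * q ^ j := by
  have hsum : Summable fun j : ℕ => ‖-(a * q ^ j)‖ := by
    simpa only [norm_neg, norm_mul, norm_pow] using
      (summable_geometric_of_lt_one (norm_nonneg q) hq).mul_left ‖a‖
  simpa only [sub_eq_add_neg] using multipliable_one_add_of_summable hsum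

theorem qPochhammer_mul_qPochhammerInf (hq : ‖q‖ < 1) (a : 𝕜) (n : ℕ) :
    qPochhammer a q n * qPochhammerInf (a * q ^ n) q = qPochhammerInf a q := by
  have hshift (j : ℕ) : 1 - a * q ^ n * q ^ j = 1 - a * q ^ (j + n) := by ring
  have hmul := multipliable_one_sub_mul_pow hq (a * q ^ n)
  simp only [qPochhammer, qPochhammerInf, hshift] at hmul ⊢
  exact hmul.prod_mul_tprod_nat_mul' (f := fun j => 1 - a * q ^ j)

theorem qPochhammerInf_pow_succ (hq : ‖q‖ < 1) (n : ℕ) :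
    qPochhammerInf (q ^ (n + 1)) q = qPochhammerInf q q / qPochhammer q q n := by
  rw [eq_div_iff (qPochhammer_self_ne_zero hq n), mul_comm, pow_succ',
    qPochhammer_mul_qPochhammerInf hq]

theorem qPochhammerInf_div_pow (hq0 : q ≠ 0) (hq : ‖q‖ < 1) {a : 𝕜} (ha : a ≠ 0) (n : ℕ) :
    qPochhammerInf (a / q ^ n) q =
      (-a) ^ n / q ^ (n + 1).choose 2 * qPochhammer (q / a) q n * qPochhammerInf a q := by
  rw [← qPochhammer_mul_qPochhammerInf hq (a / q ^ n) n, qPochhammer_div_pow_self ha hq0,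
    div_mul_cancel₀ a (pow_ne_zero n hq0)]

-- Quasi-periodicity of the theta function `(a; q)_∞ (q/a; q)_∞`.
theorem qPochhammerInf_div_pow_mul_qPochhammerInf_pow_div (hq0 : q ≠ 0) (hq : ‖q‖ < 1) {a : 𝕜}
    (ha : a ≠ 0) (n : ℕ) :
    qPochhammerInf (a / q ^ n) q * qPochhammerInf (q ^ (n + 1) / a) q =
      (-a) ^ n / q ^ (n + 1).choose 2 * (qPochhammerInf a q * qPochhammerInf (q / a) q) := by
  rw [qPochhammerInf_div_pow hq0 hq ha, ← qPochhammer_mul_qPochhammerInf hq (q / a) n,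
    pow_succ', mul_div_right_comm]
  ring

theorem latticeWeight_eq (hq0 : q ≠ 0) (hq : ‖q‖ < 1) {c₁ c₂ : 𝕜} (hc₁ : c₁ ≠ 0) (hc₂ : c₂ ≠ 0)
    (n : ℕ) :
    latticeWeight q c₁ c₂ n =
      qPochhammerInf q q * qPochhammerInf (q / c₁) q *
          (qPochhammerInf c₁ q / qPochhammerInf c₂ q) *
        ((c₁ / c₂) ^ n / (qPochhammer (q / c₂) q n * qPochhammer q q n)) := by
  have hscale : (-c₁) ^ n / q ^ (n + 1).choose 2 / ((-c₂) ^ n / q ^ (n + 1).choose 2) =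
      (c₁ / c₂) ^ n := by
    rw [div_div_div_cancel_right₀ (pow_ne_zero _ hq0), ← div_pow, neg_div_neg_eq]
  rw [latticeWeight, mul_assoc, qPochhammerInf_div_pow_mul_qPochhammerInf_pow_div hq0 hq hc₁,
    qPochhammerInf_pow_succ hq, qPochhammerInf_div_pow hq0 hq hc₂, ← hscale]
  simp only [div_eq_mul_inv, mul_inv]
  ring

-- `t ^ n` is `x ^ (k + 1) * x ^ α` at `x = q ^ n`, that is, `t = q ^ (α + 1 + k)`; excluding
-- `c₂ = q ^ m` keeps every `(c₂ q⁻ⁿ; q)_∞` and `(q / c₂; q)_l` away from division by zero.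
theorem example2_moments_general (hq0 : q ≠ 0) (hq : ‖q‖ < 1) {c₁ c₂ t : 𝕜} (hc₁ : c₁ ≠ 0)
    (hc₂ : c₂ ≠ 0) (_hpole : ∀ m : ℤ, c₂ ≠ q ^ m) (ht : ‖c₁ / c₂ * t‖ < 1) :
    (Summable fun n : ℕ => ‖t ^ n * latticeWeight q c₁ c₂ n‖) ∧
    (Summable fun l : ℕ =>
      ‖(c₁ / c₂ * t) ^ l / (qPochhammer (q / c₂) q l * qPochhammer q q l)‖) ∧
    ∑' n : ℕ, t ^ n * latticeWeight q c₁ c₂ n =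
      qPochhammerInf q q * qPochhammerInf (q / c₁) q *
          (qPochhammerInf c₁ q / qPochhammerInf c₂ q) *
        ∑' l : ℕ, (c₁ / c₂ * t) ^ l / (qPochhammer (q / c₂) q l * qPochhammer q q l) := by
  have hterm (n : ℕ) : t ^ n * latticeWeight q c₁ c₂ n =
      qPochhammerInf q q * qPochhammerInf (q / c₁) q *
          (qPochhammerInf c₁ q / qPochhammerInf c₂ q) *
        ((c₁ / c₂ * t) ^ n / (qPochhammer (q / c₂) q n * qPochhammer q q n)) := by
    rw [latticeWeight_eq hq0 hq hc₁ hc₂, mul_pow]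
    ring
  have hsum := summable_norm_pow_div_qPochhammer_mul_qPochhammer hq (q / c₂) q ht
  simp only [hterm, norm_mul _ (_ / (_ * _))]
  exact ⟨hsum.mul_left _, hsum, tsum_mul_left⟩

end NormedField

theorem pow_mul_rpow_natCast_mul {q : ℝ} (hq : 0 < q) (α : ℝ) (k n : ℕ) :
    q ^ (n * (k + 1)) * q ^ ((n : ℝ) * α) = (q ^ (α + 1 + (k : ℝ))) ^ n := by
  rw [← Real.rpow_natCast, ← Real.rpow_add hq, ← Real.rpow_mul_natCast hq.le]
  push_cast
  ring_nf

/-- The k-th moment of the Example 2 weight on the lattice {qⁿ}: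
(1-q) Σₙ q^{n(k+1)} w(qⁿ)
  = (1-q)(q;q)_∞(q/c₁;q)_∞ ((c₁;q)_∞/(c₂;q)_∞) ₂φ₁(0,0;q/c₂;q;(c₁/c₂)q^{α+1+k}),
both series converging absolutely. -/
theorem example2_moments (q α c₁ c₂ : ℝ) (k : ℕ)
    (hq0 : 0 < q) (hq1 : q < 1) (hα : 0 < α) (hc1 : c₁ < 0) (hc2 : c₂ < 0)
    (hz : |c₁ / c₂| * q ^ (α + (k : ℝ) + 1) < 1) :
    Summable (fun n : ℕ => q ^ (n * (k + 1)) *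
        (q ^ ((n : ℝ) * α) * (∏' j : ℕ, (1 - q ^ (n + 1) * q ^ j)) *
          (∏' j : ℕ, (1 - c₁ / q ^ n * q ^ j)) * (∏' j : ℕ, (1 - q ^ (n + 1) / c₁ * q ^ j)) /
          ∏' j : ℕ, (1 - c₂ / q ^ n * q ^ j))) ∧
    Summable (fun l : ℕ => (c₁ / c₂ * q ^ (α + 1 + (k : ℝ))) ^ l /
        ((∏ i ∈ Finset.range l, (1 - q / c₂ * q ^ i)) *
          ∏ i ∈ Finset.range l, (1 - q * q ^ i))) ∧
    (1 - q) * ∑' n : ℕ, q ^ (n * (k + 1)) *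
        (q ^ ((n : ℝ) * α) * (∏' j : ℕ, (1 - q ^ (n + 1) * q ^ j)) *
          (∏' j : ℕ, (1 - c₁ / q ^ n * q ^ j)) * (∏' j : ℕ, (1 - q ^ (n + 1) / c₁ * q ^ j)) /
          ∏' j : ℕ, (1 - c₂ / q ^ n * q ^ j)) =
      (1 - q) * (∏' j : ℕ, (1 - q * q ^ j)) * (∏' j : ℕ, (1 - q / c₁ * q ^ j)) *
        ((∏' j : ℕ, (1 - c₁ * q ^ j)) / ∏' j : ℕ, (1 - c₂ * q ^ j)) *
        ∑' l : ℕ, (c₁ / c₂ * q ^ (α + 1 + (k : ℝ))) ^ l /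
          ((∏ i ∈ Finset.range l, (1 - q / c₂ * q ^ i)) *
            ∏ i ∈ Finset.range l, (1 - q * q ^ i)) := by
  have hpole (m : ℤ) : c₂ ≠ q ^ m := (hc2.trans (zpow_pos hq0 m)).ne
  have ht : ‖c₁ / c₂ * q ^ (α + 1 + (k : ℝ))‖ < 1 := by
    rwa [norm_mul, Real.norm_eq_abs, Real.norm_of_nonneg (Real.rpow_nonneg hq0.le _),
      add_right_comm]
  have hmoment (n : ℕ) (A B C D : ℝ) : q ^ (n * (k + 1)) * (q ^ ((n : ℝ) * α) * A * B * C / D) =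
      (q ^ (α + 1 + (k : ℝ))) ^ n * (A * B * C / D) := by
    rw [← pow_mul_rpow_natCast_mul hq0]
    ring
  obtain ⟨hweight, hphi, heq⟩ := example2_moments_general hq0.ne'
    (by rwa [Real.norm_of_nonneg hq0.le]) hc1.ne hc2.ne hpole ht
  simp only [latticeWeight, qPochhammerInf, qPochhammer] at hweight hphi heq
  simp only [hmoment]
  exact ⟨hweight.of_norm, hphi.of_norm, by rw [heq]; ring⟩
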